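/- arXiv:1401.3636 — 3 statements merged into one kernel-verified Lean document; each statement's English description precedes it below -/
import Mathlib

section
/- Let φ : ℂ → ℂ be analytic on the open disk {t : |t − 1| < R} for some R > 1, and let a, d be complex numbers such that 2a+1 and d are not nonpositive integers, d ≠ 0, and a + 1/2 is not a nonpositive integer or zero. Suppose the double series Σ_{k≥0} Σ_{n≥k} [2^k (a)_k (d+1)_k / ((2a+1)_k (d)_k k!)] · [(−1)^n (−n)_k / n!] · φ^{(n)}(1) is absolutely summable (so the order of summation may be interchanged). Then Σ_{k=0}^∞ 2^k (a)_k (d+1)_k φ^{(k)}(0) / ((2a+1)_k (d)_k k!) = Σ_{k=0}^∞ φ^{(2k)}(1) / (2^{2k} (a+1/2)_k k!) − ((1 − 2a/d)/(2a+1)) · Σ_{k=0}^∞ φ^{(2k+1)}(1) / (2^{2k} (a+3/2)_k k!). -/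
/-!
The left-hand side is `L (φ (2 X))`, where `L` is the linear functional on polynomials in `X` whose
`k`-th moment is `(a)_k (d+1)_k / ((2a+1)_k (d)_k) = (1 + k/d) (a)_k / (2a+1)_k`. Expanding `φ` at
`1` instead of `0` turns it into `∑ n, φ⁽ⁿ⁾(1) / n! * L ((2 X - 1) ^ n)`, so only the moments of
`2 X - 1` are needed. The factor `1 + k/d` is the action of the Euler operator `1 + d⁻¹ X d/dX`. For
the moments `(a)_k / (2a+1)_k` of the beta distribution with parameters `a` and `a + 1`, integration
by parts gives a three-term recurrence for the moments of `2 X - 1`, which has a closed solution for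
each parity of `n`.
-/

/-- The Pochhammer symbol `(a)_k = a (a+1) ⋯ (a+k-1)`. -/
noncomputable def poch (a : ℂ) (k : ℕ) : ℂ := Polynomial.eval a (ascPochhammer ℂ k)

section Poch

lemma poch_zero (a : ℂ) : poch a 0 = 1 := by simp [poch]

lemma poch_succ (a : ℂ) (k : ℕ) : poch a (k + 1) = poch a k * (a + k) :=
  ascPochhammer_succ_eval k a

lemma poch_succ_left (a : ℂ) (k : ℕ) : poch a (k + 1) = a * poch (a + 1) k := by
  simp [poch, ascPochhammer_succ_left]

lemma poch_ne_zero {a : ℂ} (ha : ∀ n : ℕ, a ≠ -(n : ℂ)) (k : ℕ) : poch a k ≠ 0 := by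
  rw [poch, Ne, ascPochhammer_eval_eq_zero_iff]
  rintro ⟨n, -, hn⟩
  exact ha n (by rw [hn, neg_neg])

lemma poch_add_one_div_poch {d : ℂ} (hd : ∀ n : ℕ, d ≠ -(n : ℂ)) (k : ℕ) :
    poch (d + 1) k / poch d k = 1 + d⁻¹ * k := by
  have hd0 : d ≠ 0 := by simpa using hd 0
  have hshift : d * poch (d + 1) k = poch d k * (d + k) := by rw [← poch_succ_left, poch_succ]
  rw [div_eq_iff (poch_ne_zero hd k)]
  field_simp
  linear_combination hshift

lemma neg_one_pow_mul_poch_neg_div_factorial (k m : ℕ) :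
    (-1) ^ (k + m) * poch (-((k + m : ℕ) : ℂ)) k / ((k + m).factorial : ℂ) =
      (-1) ^ m / (m.factorial : ℂ) := by
  have hdesc := Nat.factorial_mul_descFactorial (Nat.le_add_right k m)
  rw [Nat.add_sub_cancel_left] at hdesc
  rw [poch, ascPochhammer_eval_neg_eq_descPochhammer, descPochhammer_eval_eq_descFactorial,
    div_eq_div_iff (Nat.cast_ne_zero.mpr (k + m).factorial_ne_zero)
      (Nat.cast_ne_zero.mpr m.factorial_ne_zero), ← hdesc]
  have hsign : ((-1 : ℂ) ^ k) ^ 2 = 1 := by rw [← pow_mul, pow_mul', neg_one_sq, one_pow]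
  push_cast
  linear_combination
    ((-1) ^ m * ((k + m).descFactorial k : ℂ) * (m.factorial : ℂ)) * hsign

lemma poch_one_half (m : ℕ) :
    poch (1 / 2) m = ((2 * m).factorial : ℂ) / (2 ^ (2 * m) * (m.factorial : ℂ)) := by
  induction m with
  | zero => simp [poch_zero]
  | succ m ih =>
    rw [poch_succ, ih, Nat.mul_succ, Nat.factorial_succ, Nat.factorial_succ, Nat.factorial_succ]
    push_cast
    field_simp
    ring

lemma poch_one_half_div_factorial (x : ℂ) (m : ℕ) :
    poch (1 / 2) m / x / ((2 * m).factorial : ℂ) = (2 ^ (2 * m) * x * (m.factorial : ℂ))⁻¹ := by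
  have hfactorial : ((2 * m).factorial : ℂ) ≠ 0 := Nat.cast_ne_zero.mpr (2 * m).factorial_ne_zero
  rw [poch_one_half]
  field_simp

lemma poch_one_half_succ_div_factorial (a : ℂ) (m : ℕ) :
    poch (1 / 2) (m + 1) / poch (a + 1 / 2) (m + 1) / ((2 * m + 1).factorial : ℂ) =
      (2 * a + 1)⁻¹ * (2 ^ (2 * m) * poch (a + 3 / 2) m * (m.factorial : ℂ))⁻¹ := by
  have hpoch : poch (a + 1 / 2) (m + 1) = (2 * a + 1) / 2 * poch (a + 3 / 2) m := by
    rw [poch_succ_left, show a + 1 / 2 + 1 = a + 3 / 2 by ring]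
    ring
  have hfactorial := poch_one_half_div_factorial (poch (a + 3 / 2) m) m
  have hodd : (2 * m + 1 : ℂ) ≠ 0 := by exact_mod_cast (2 * m).succ_ne_zero
  rw [hpoch, poch_succ, ← hfactorial, Nat.factorial_succ,
    show 1 / 2 + (m : ℂ) = (2 * m + 1) / 2 by ring]
  push_cast
  field_simp

end Poch

section MomentFunctional

open Polynomial Finset.HasAntidiagonal

/-- The umbral functional `X ^ k ↦ μ k`: the expectation of a polynomial in a variable with
prescribed moments `μ`. -/
noncomputable def momentFunctional {R : Type*} [CommSemiring R] (μ : ℕ → R) : R[X] →ₗ[R] R :=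
  lsum fun k => LinearMap.mulLeft R (μ k)

/-- The `n`-th moment of `s X + w`, for a variable `X` with moments `μ`. -/
noncomputable def affineMoment {R : Type*} [CommSemiring R] (μ : ℕ → R) (s w : R) (n : ℕ) : R :=
  momentFunctional μ ((C s * X + C w) ^ n)

section CommSemiring

variable {R : Type*} [CommSemiring R] (μ : ℕ → R)

lemma momentFunctional_monomial (k : ℕ) (r : R) :
    momentFunctional μ (monomial k r) = μ k * r := by
  simp [momentFunctional, sum_monomial_index]

lemma momentFunctional_C_mul (r : R) (p : R[X]) :
    momentFunctional μ (C r * p) = r * momentFunctional μ p := by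
  rw [← smul_eq_C_mul, map_smul, smul_eq_mul]

lemma momentFunctional_one_add_mul (t : R) (p : R[X]) :
    momentFunctional (fun k => (1 + t * k) * μ k) p =
      momentFunctional μ p + t * momentFunctional μ (X * derivative p) := by
  induction p using Polynomial.induction_on' with
  | add p q hp hq => simp only [map_add, mul_add, hp, hq]; ring
  | monomial j r =>
    have heuler : X * derivative (monomial j r) = monomial j (r * j) := by
      rcases j with _ | j <;> simp [X_mul_monomial]
    simp only [heuler, momentFunctional_monomial]
    ring

lemma affineMoment_zero (s w : R) : affineMoment μ s w 0 = μ 0 := by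
  rw [affineMoment, pow_zero, ← monomial_zero_one, momentFunctional_monomial, mul_one]

lemma affineMoment_eq_sum_antidiagonal (s w : R) (n : ℕ) :
    affineMoment μ s w n =
      ∑ p ∈ antidiagonal n, (n.choose p.1 : R) * (s ^ p.1 * μ p.1 * w ^ p.2) := by
  rw [affineMoment, (Commute.all _ _).add_pow', map_sum]
  refine Finset.sum_congr rfl fun p _ => ?_
  have hmonomial : (C s * X) ^ p.1 * C w ^ p.2 = monomial p.1 (s ^ p.1 * w ^ p.2) := by
    rw [← C_mul_X_pow_eq_monomial, mul_pow, C_mul, C_pow, C_pow, mul_right_comm]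
  rw [hmonomial, map_nsmul, momentFunctional_monomial, nsmul_eq_mul]
  ring

end CommSemiring

lemma affineMoment_div_factorial {K : Type*} [Field K] [CharZero K] (μ : ℕ → K) (s w : K)
    (n : ℕ) :
    affineMoment μ s w n / (n.factorial : K) =
      ∑ p ∈ antidiagonal n,
        s ^ p.1 * μ p.1 / (p.1.factorial : K) * (w ^ p.2 / (p.2.factorial : K)) := by
  rw [affineMoment_eq_sum_antidiagonal, Finset.sum_div]
  refine Finset.sum_congr rfl fun p hp => ?_
  obtain rfl := mem_antidiagonal.mp hp
  have hfactorial (k : ℕ) : (k.factorial : K) ≠ 0 := Nat.cast_ne_zero.mpr k.factorial_ne_zero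
  rw [Nat.cast_add_choose]
  field_simp [hfactorial]

section CommRing

variable {R : Type*} [CommRing R] {μ : ℕ → R}

lemma momentFunctional_integration_by_parts {b c : R}
    (hμ : ∀ k : ℕ, (c + k) * μ (k + 1) = (b + k) * μ k) (p : R[X]) :
    momentFunctional μ ((C b - C c * X) * p + X * (1 - X) * derivative p) = 0 := by
  induction p using Polynomial.induction_on' with
  | add p q hp hq => rw [derivative_add, mul_add, mul_add, add_add_add_comm, map_add, hp, hq,
      add_zero]
  | monomial j r =>
    have hmonomial : (C b - C c * X) * monomial j r + X * (1 - X) * derivative (monomial j r) =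
        monomial j ((b + j) * r) - monomial (j + 1) ((c + j) * r) := by
      rcases j with _ | j <;>
        simp only [← C_mul_X_pow_eq_monomial, derivative_C_mul, derivative_X_pow, C_mul, C_add,
          C_eq_natCast, C_0, Nat.cast_zero, Nat.cast_succ, Nat.add_sub_cancel] <;>
        ring
    rw [hmonomial, map_sub, momentFunctional_monomial, momentFunctional_monomial]
    linear_combination -r * hμ j

variable (μ) in
lemma affineMoment_one_add_mul (t s w : R) (n : ℕ) :
    affineMoment (fun k => (1 + t * k) * μ k) s w n =
      affineMoment μ s w n +
        t * n * (affineMoment μ s w n - w * affineMoment μ s w (n - 1)) := by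
  have heuler : X * derivative ((C s * X + C w) ^ n) =
      C (n : R) * ((C s * X + C w) ^ n - C w * (C s * X + C w) ^ (n - 1)) := by
    rcases n with _ | n
    · simp
    · have hderiv : derivative (C s * X + C w) = C s := by simp
      rw [derivative_pow, hderiv, Nat.add_sub_cancel]
      ring
  simp only [affineMoment]
  rw [momentFunctional_one_add_mul, heuler, momentFunctional_C_mul, map_sub,
    momentFunctional_C_mul, mul_assoc]

lemma affineMoment_two_neg_one_succ {b c : R}
    (hμ : ∀ k : ℕ, (c + k) * μ (k + 1) = (b + k) * μ k) (n : ℕ) :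
    (c + n) * affineMoment μ 2 (-1) (n + 1) =
      (2 * b - c) * affineMoment μ 2 (-1) n + n * affineMoment μ 2 (-1) (n - 1) := by
  have hparts := momentFunctional_integration_by_parts hμ ((C 2 * X + C (-1)) ^ n)
  set u : R[X] := C 2 * X + C (-1) with hu
  have hrec : C (c + n) * u ^ (n + 1) + C 2 * ((C b - C c * X) * u ^ n +
      X * (1 - X) * derivative (u ^ n)) = C (2 * b - c) * u ^ n + C (n : R) * u ^ (n - 1) := by
    have hderiv : derivative u = C 2 := by simp [hu]
    rw [derivative_pow, hderiv]
    rcases n with _ | n <;>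
      simp only [hu, Nat.cast_zero, Nat.add_sub_cancel, C_add, C_sub, C_mul, C_neg, C_0, C_1,
        C_ofNat] <;>
      ring
  have h := congrArg (momentFunctional μ) hrec
  rwa [LinearMap.map_add, momentFunctional_C_mul, momentFunctional_C_mul, hparts, mul_zero,
    add_zero, LinearMap.map_add, momentFunctional_C_mul, momentFunctional_C_mul] at h

end CommRing

end MomentFunctional

section UmbralTaylor

open Finset.HasAntidiagonal

lemma tsum_eq_tsum_even_add_tsum_odd {M : Type*} [AddCommGroup M] [UniformSpace M]
    [IsUniformAddGroup M] [CompleteSpace M] [T2Space M] {f : ℕ → M} (hf : Summable f) :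
    ∑' n, f n = ∑' k, f (2 * k) + ∑' k, f (2 * k + 1) :=
  (tsum_even_add_odd (hf.comp_injective (mul_right_injective₀ two_ne_zero))
    (hf.comp_injective ((add_left_injective 1).comp (mul_right_injective₀ two_ne_zero)))).symm

lemma hasSum_sum_antidiagonal {A M : Type*} [AddMonoid A] [Finset.HasAntidiagonal A]
    [AddCommMonoid M] [TopologicalSpace M] [ContinuousAdd M] [RegularSpace M] {f : A × A → M}
    {s : M} (hf : HasSum f s) : HasSum (fun n => ∑ p ∈ antidiagonal n, f p) s :=
  (sigmaAntidiagonalEquivProd.hasSum_iff.mpr hf).sigma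
    fun n => (antidiagonal n).hasSum f

variable {E : Type*} [NormedAddCommGroup E] [NormedSpace ℂ E] [CompleteSpace E]
  {φ : ℂ → E} {c z : ℂ} {r : ℝ}

lemma hasSum_taylorSeries_iteratedDeriv (hφ : DifferentiableOn ℂ φ (Metric.ball c r))
    (hz : z ∈ Metric.ball c r) (k : ℕ) :
    HasSum (fun m : ℕ => ((z - c) ^ m / (m.factorial : ℂ)) • iteratedDeriv (k + m) φ c)
      (iteratedDeriv k φ z) := by
  have hderiv : DifferentiableOn ℂ (iteratedDeriv k φ) (Metric.ball c r) := by
    rw [iteratedDeriv_eq_iterate]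
    exact ((hφ.analyticOnNhd Metric.isOpen_ball).iterated_deriv k).differentiableOn
  convert Complex.hasSum_taylorSeries_on_ball hderiv hz using 2 with m
  have hadd : iteratedDeriv m (iteratedDeriv k φ) = iteratedDeriv (k + m) φ := by
    simp only [iteratedDeriv_eq_iterate, ← Function.iterate_add_apply, add_comm]
  rw [hadd, smul_smul, div_eq_inv_mul]

/-- Umbrally, the functional with moments `μ` is applied to the Taylor expansions of `φ (z + s X)`
at `z` and at `c`. -/
lemma hasSum_affineMoment_smul_iteratedDeriv (hφ : DifferentiableOn ℂ φ (Metric.ball c r))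
    (hz : z ∈ Metric.ball c r) {μ : ℕ → ℂ} {s : ℂ}
    (hsum : Summable fun p : ℕ × ℕ => (s ^ p.1 * μ p.1 / (p.1.factorial : ℂ) *
      ((z - c) ^ p.2 / (p.2.factorial : ℂ))) • iteratedDeriv (p.1 + p.2) φ c) :
    HasSum (fun n => (affineMoment μ s (z - c) n / (n.factorial : ℂ)) • iteratedDeriv n φ c)
      (∑' k : ℕ, (s ^ k * μ k / (k.factorial : ℂ)) • iteratedDeriv k φ z) := by
  have hrows : ∑' k : ℕ, (s ^ k * μ k / (k.factorial : ℂ)) • iteratedDeriv k φ z =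
      ∑' p : ℕ × ℕ, (s ^ p.1 * μ p.1 / (p.1.factorial : ℂ) *
        ((z - c) ^ p.2 / (p.2.factorial : ℂ))) • iteratedDeriv (p.1 + p.2) φ c := by
    rw [hsum.tsum_prod]
    refine tsum_congr fun k => ?_
    simp only [mul_smul]
    exact ((hasSum_taylorSeries_iteratedDeriv hφ hz k).const_smul _).tsum_eq.symm
  rw [hrows]
  convert hasSum_sum_antidiagonal hsum.hasSum using 2 with n
  rw [affineMoment_div_factorial, Finset.sum_smul]
  refine Finset.sum_congr rfl fun p hp => ?_
  rw [mem_antidiagonal.mp hp]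

end UmbralTaylor

section BetaMoment

/-- The moments `(a)_k / (2a+1)_k` of the beta distribution with parameters `a` and `a + 1`,
continued to complex `a`. -/
noncomputable def betaMoment (a : ℂ) (k : ℕ) : ℂ := poch a k / poch (2 * a + 1) k

/-- The moments `(a)_k (d+1)_k / ((2a+1)_k (d)_k)` of Entry 8, with the quotient `(d+1)_k / (d)_k`
replaced by its value `1 + k / d`. -/
noncomputable def weightedBetaMoment (a d : ℂ) (k : ℕ) : ℂ := (1 + d⁻¹ * k) * betaMoment a k

variable {a : ℂ} (ha : ∀ n : ℕ, 2 * a + 1 ≠ -(n : ℂ))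
include ha

lemma betaMoment_succ (k : ℕ) :
    (2 * a + 1 + k) * betaMoment a (k + 1) = (a + k) * betaMoment a k := by
  have hpoch := poch_ne_zero ha k
  have hk : 2 * a + 1 + k ≠ 0 := fun h => ha k (eq_neg_of_add_eq_zero_left h)
  rw [betaMoment, betaMoment, poch_succ, poch_succ]
  field_simp

lemma add_one_half_ne_neg_natCast (n : ℕ) : a + 1 / 2 ≠ -(n : ℂ) := fun h =>
  ha (2 * n) (by push_cast; linear_combination 2 * h)

lemma poch_one_half_div_succ (m : ℕ) :
    (2 * a + 1 + 2 * m) * (poch (1 / 2) (m + 1) / poch (a + 1 / 2) (m + 1)) =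
      (2 * m + 1) * (poch (1 / 2) m / poch (a + 1 / 2) m) := by
  have hm : a + 1 / 2 + m ≠ 0 := fun h =>
    add_one_half_ne_neg_natCast ha m (eq_neg_of_add_eq_zero_left h)
  rw [poch_succ, poch_succ, mul_div_mul_comm, show 2 * a + 1 + 2 * m = 2 * (a + 1 / 2 + m) by ring]
  linear_combination
    2 * (poch (1 / 2) m / poch (a + 1 / 2) m) * mul_div_cancel₀ (1 / 2 + (m : ℂ)) hm

lemma affineMoment_betaMoment (m : ℕ) :
    affineMoment (betaMoment a) 2 (-1) (2 * m) = poch (1 / 2) m / poch (a + 1 / 2) m ∧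
      affineMoment (betaMoment a) 2 (-1) (2 * m + 1) =
        -(poch (1 / 2) (m + 1) / poch (a + 1 / 2) (m + 1)) := by
  have hrec := affineMoment_two_neg_one_succ (betaMoment_succ ha)
  have hne (n : ℕ) : 2 * a + 1 + n ≠ 0 := fun h => ha n (eq_neg_of_add_eq_zero_left h)
  induction m with
  | zero =>
    have heven : affineMoment (betaMoment a) 2 (-1) 0 = 1 := by
      rw [affineMoment_zero, betaMoment, poch_zero, poch_zero, div_one]
    refine ⟨by simp [heven, poch_zero], mul_left_cancel₀ (hne 0) ?_⟩
    have h0 := poch_one_half_div_succ ha 0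
    have h1 := hrec 0
    simp only [heven, poch_zero, Nat.cast_zero, mul_zero, zero_mul, add_zero] at h0 h1 ⊢
    linear_combination h1 + h0
  | succ m ih =>
    have heven : affineMoment (betaMoment a) 2 (-1) (2 * (m + 1)) =
        poch (1 / 2) (m + 1) / poch (a + 1 / 2) (m + 1) := by
      refine mul_left_cancel₀ (hne (2 * m + 1)) ?_
      have h := hrec (2 * m + 1)
      rw [Nat.add_sub_cancel, ih.1, ih.2] at h
      push_cast at h ⊢
      linear_combination h - poch_one_half_div_succ ha m
    refine ⟨heven, mul_left_cancel₀ (hne (2 * (m + 1))) ?_⟩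
    have h := hrec (2 * (m + 1))
    rw [heven, show 2 * (m + 1) - 1 = 2 * m + 1 by omega, ih.2] at h
    have hr := poch_one_half_div_succ ha (m + 1)
    push_cast at h hr ⊢
    linear_combination h + hr

lemma affineMoment_weightedBetaMoment_even (d : ℂ) (m : ℕ) :
    affineMoment (weightedBetaMoment a d) 2 (-1) (2 * m) / ((2 * m).factorial : ℂ) =
      (2 ^ (2 * m) * poch (a + 1 / 2) m * (m.factorial : ℂ))⁻¹ := by
  have hweight : affineMoment (weightedBetaMoment a d) 2 (-1) (2 * m) =
      affineMoment (betaMoment a) 2 (-1) (2 * m) := by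
    refine (affineMoment_one_add_mul _ _ _ _ _).trans ?_
    rcases m with _ | m
    · simp
    · rw [show 2 * (m + 1) - 1 = 2 * m + 1 by omega, (affineMoment_betaMoment ha (m + 1)).1,
        (affineMoment_betaMoment ha m).2, neg_one_mul, neg_neg, sub_self, mul_zero, add_zero]
  rw [hweight, (affineMoment_betaMoment ha m).1, poch_one_half_div_factorial]

lemma affineMoment_weightedBetaMoment_odd (d : ℂ) (m : ℕ) :
    affineMoment (weightedBetaMoment a d) 2 (-1) (2 * m + 1) / ((2 * m + 1).factorial : ℂ) =
      -((1 - 2 * a / d) / (2 * a + 1) *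
        (2 ^ (2 * m) * poch (a + 3 / 2) m * (m.factorial : ℂ))⁻¹) := by
  have hweight : affineMoment (weightedBetaMoment a d) 2 (-1) (2 * m + 1) =
      -((1 - 2 * a / d) * (poch (1 / 2) (m + 1) / poch (a + 1 / 2) (m + 1))) := by
    refine (affineMoment_one_add_mul _ _ _ _ _).trans ?_
    rw [Nat.add_sub_cancel, (affineMoment_betaMoment ha m).1, (affineMoment_betaMoment ha m).2]
    push_cast
    linear_combination -d⁻¹ * poch_one_half_div_succ ha m
  rw [hweight, neg_div, mul_div_assoc, poch_one_half_succ_div_factorial]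
  ring

end BetaMoment

lemma two_pow_mul_poch_div_eq_weightedBetaMoment (a : ℂ) {d : ℂ}
    (hd : ∀ n : ℕ, d ≠ -(n : ℂ)) (k : ℕ) :
    2 ^ k * poch a k * poch (d + 1) k /
        (poch (2 * a + 1) k * poch d k * (k.factorial : ℂ)) =
      2 ^ k * weightedBetaMoment a d k / (k.factorial : ℂ) := by
  rw [weightedBetaMoment, ← poch_add_one_div_poch hd, betaMoment, div_mul_div_comm,
    mul_div_assoc', div_div]
  ring

theorem ramanujan_entry8_generalization_general {E : Type*} [NormedAddCommGroup E]
    [NormedSpace ℂ E] [CompleteSpace E] {φ : ℂ → E} {R : ℝ} (hR : 1 < R)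
    (hφ : DifferentiableOn ℂ φ (Metric.ball 1 R)) {a d : ℂ}
    (h2a1 : ∀ n : ℕ, 2 * a + 1 ≠ -(n : ℂ)) (hd : ∀ n : ℕ, d ≠ -(n : ℂ))
    (hsum : Summable fun p : ℕ × ℕ =>
      ((2 ^ p.1 * poch a p.1 * poch (d + 1) p.1 /
          (poch (2 * a + 1) p.1 * poch d p.1 * (p.1.factorial : ℂ))) *
        ((-1) ^ (p.1 + p.2) * poch (-((p.1 + p.2 : ℕ) : ℂ)) p.1 /
          ((p.1 + p.2).factorial : ℂ))) • iteratedDeriv (p.1 + p.2) φ 1) :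
    ∑' k : ℕ, (2 ^ k * poch a k * poch (d + 1) k /
        (poch (2 * a + 1) k * poch d k * (k.factorial : ℂ))) • iteratedDeriv k φ 0 =
      (∑' k : ℕ, (2 ^ (2 * k) * poch (a + 1 / 2) k * (k.factorial : ℂ))⁻¹ •
          iteratedDeriv (2 * k) φ 1) -
        ((1 - 2 * a / d) / (2 * a + 1)) •
          ∑' k : ℕ, (2 ^ (2 * k) * poch (a + 3 / 2) k * (k.factorial : ℂ))⁻¹ •
            iteratedDeriv (2 * k + 1) φ 1 := by
  simp only [two_pow_mul_poch_div_eq_weightedBetaMoment a hd,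
    neg_one_pow_mul_poch_neg_div_factorial] at hsum ⊢
  rw [← zero_sub (1 : ℂ)] at hsum
  have hzero : (0 : ℂ) ∈ Metric.ball 1 R := by simpa using hR
  have htaylor := hasSum_affineMoment_smul_iteratedDeriv hφ hzero hsum
  rw [zero_sub] at htaylor
  rw [← htaylor.tsum_eq, tsum_eq_tsum_even_add_tsum_odd htaylor.summable, sub_eq_add_neg,
    ← tsum_const_smul'', ← tsum_neg]
  simp only [affineMoment_weightedBetaMoment_even h2a1, affineMoment_weightedBetaMoment_odd h2a1,
    neg_smul, mul_smul]

/-- Generalization of Ramanujan's Entry 8 (Theorem 2 of the paper): if `φ` is analytic on a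
disk of radius `R > 1` about `1` and the double series may be summed in either order, then
`Σ_{k≥0} 2^k (a)_k (d+1)_k φ^{(k)}(0) / ((2a+1)_k (d)_k k!)
  = Σ_{k≥0} φ^{(2k)}(1) / (2^{2k} (a+1/2)_k k!)
    - ((1-2a/d)/(2a+1)) Σ_{k≥0} φ^{(2k+1)}(1) / (2^{2k} (a+3/2)_k k!)`. -/
theorem ramanujan_entry8_generalization
    (φ : ℂ → ℂ) (R : ℝ) (hR : 1 < R)
    (hφ : AnalyticOnNhd ℂ φ (Metric.ball (1 : ℂ) R))
    (a d : ℂ)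
    (h2a1 : ∀ n : ℕ, 2 * a + 1 ≠ -(n : ℂ))
    (hd : ∀ n : ℕ, d ≠ -(n : ℂ))
    (hd0 : d ≠ 0)
    (ha : ∀ n : ℕ, a + 1 / 2 ≠ -(n : ℂ))
    (hsum : Summable (fun p : ℕ × ℕ =>
      ‖(2 ^ p.1 * poch a p.1 * poch (d + 1) p.1 /
          (poch (2 * a + 1) p.1 * poch d p.1 * (Nat.factorial p.1 : ℂ))) *
        ((-1 : ℂ) ^ (p.1 + p.2) * poch (-(((p.1 + p.2 : ℕ)) : ℂ)) p.1 /
          (Nat.factorial (p.1 + p.2) : ℂ)) * iteratedDeriv (p.1 + p.2) φ 1‖)) :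
    ∑' k : ℕ, 2 ^ k * poch a k * poch (d + 1) k * iteratedDeriv k φ 0 /
        (poch (2 * a + 1) k * poch d k * (Nat.factorial k : ℂ))
      = (∑' k : ℕ, iteratedDeriv (2 * k) φ 1 /
            (2 ^ (2 * k) * poch (a + 1 / 2) k * (Nat.factorial k : ℂ)))
        - ((1 - 2 * a / d) / (2 * a + 1)) *
          ∑' k : ℕ, iteratedDeriv (2 * k + 1) φ 1 /
            (2 ^ (2 * k) * poch (a + 3 / 2) k * (Nat.factorial k : ℂ)) := by
  simp only [mul_div_right_comm _ (iteratedDeriv _ φ _), div_eq_inv_mul (iteratedDeriv _ φ _)]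
  exact ramanujan_entry8_generalization_general hR hφ.differentiableOn h2a1 hd hsum.of_norm
end

section
/- Let φ : ℂ → ℂ be analytic on the open disk {t : |t − 1| < R} for some R > 1, and let a be a complex number such that 2a is not a nonpositive integer or zero and a + 1/2 is not a nonpositive integer or zero. Suppose the double series Σ_{k≥0} Σ_{n≥k} [2^k (a)_k / ((2a)_k k!)] · [(−1)^n (−n)_k / n!] · φ^{(n)}(1) is absolutely summable (so the order of summation may be interchanged). Then Σ_{k=0}^∞ 2^k (a)_k φ^{(k)}(0) / ((2a)_k k!) = Σ_{k=0}^∞ φ^{(2k)}(1) / (2^{2k} (a+1/2)_k k!). -/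
/-!
Formally `φ(z + t) = exp (t D) φ(z)`. Hence, for a power series `F`, Taylor expansion about `1` and
interchange of the two summations turn `F(D) φ` at `0` into `exp (-D) F(D) φ` at `1`. For
`F = ₁F₁(a; 2a; 2X)` the series `G = exp (-X) F` is even and equals `₀F₁(; a + 1/2; X² / 4)`, which
is Kummer's second theorem: Kummer's equation for `F` becomes `X G'' + 2a G' = X G`, a two-term
recurrence that links coefficients two apart.
-/

open PowerSeries

lemma ascPochhammer_eval_ne_zero {R : Type*} [CommRing R] [IsDomain R] {b : R}
    (hb : ∀ n : ℕ, b ≠ -(n : R)) (k : ℕ) : (ascPochhammer R k).eval b ≠ 0 := by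
  rw [Ne, ascPochhammer_eval_eq_zero_iff]
  rintro ⟨n, -, hn⟩
  exact hb n (by rw [hn, neg_neg])

lemma neg_one_pow_mul_ascPochhammer_neg_div_factorial {K : Type*} [Field K] [CharZero K]
    (k m : ℕ) :
    (-1) ^ (k + m) * (ascPochhammer K k).eval (-((k + m : ℕ) : K)) / ((k + m).factorial : K) =
      (-1) ^ m / (m.factorial : K) := by
  have hfactorial :
      (m.factorial : K) * ((k + m).descFactorial k : K) = ((k + m).factorial : K) := by
    have h := Nat.factorial_mul_descFactorial (Nat.le_add_right k m)
    rw [Nat.add_sub_cancel_left] at h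
    exact_mod_cast h
  have hsign : (-1 : K) ^ k * (-1) ^ k = 1 := by rw [← mul_pow]; simp
  have hm : (m.factorial : K) ≠ 0 := Nat.cast_ne_zero.mpr m.factorial_ne_zero
  have hkm : ((k + m).factorial : K) ≠ 0 := Nat.cast_ne_zero.mpr (k + m).factorial_ne_zero
  rw [ascPochhammer_eval_neg_eq_descPochhammer, descPochhammer_eval_eq_descFactorial,
    div_eq_div_iff hkm hm, ← hfactorial]
  linear_combination (-1) ^ m * (m.factorial : K) * ((k + m).descFactorial k : K) * hsign

lemma derivative_rescale {R : Type*} [CommSemiring R] (c : R) (f : R⟦X⟧) :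
    d⁄dX R (rescale c f) = C c * rescale c (d⁄dX R f) := by
  ext n
  simp only [coeff_derivative, coeff_rescale, coeff_C_mul]
  ring

lemma derivative_rescale_neg_one_exp {R : Type*} [CommRing R] [Algebra ℚ R] :
    d⁄dX R (rescale (-1) (exp R)) = -rescale (-1) (exp R) := by
  rw [derivative_rescale, derivative_exp, map_neg, map_one, neg_one_mul]

section BesselEquation

variable {R : Type*} [CommRing R] {b : R} {G : R⟦X⟧}

lemma coeff_add_two_of_bessel_ode
    (hG : X * d⁄dX R (d⁄dX R G) + C b * d⁄dX R G = X * G) (n : ℕ) :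
    (n + 2) * (b + n + 1) * coeff (n + 2) G = coeff n G := by
  have h := congrArg (coeff (n + 1)) hG
  simp only [map_add, coeff_succ_X_mul, coeff_C_mul, coeff_derivative] at h
  push_cast at h
  linear_combination h

lemma coeff_even_of_bessel_ode {c : R} (hc : 2 * c = b + 1)
    (hG : X * d⁄dX R (d⁄dX R G) + C b * d⁄dX R G = X * G) (n : ℕ) :
    2 ^ (2 * n) * (ascPochhammer R n).eval c * (n.factorial : R) * coeff (2 * n) G =
      coeff 0 G := by
  induction n with
  | zero => simp
  | succ n ih =>
    have hrec := coeff_add_two_of_bessel_ode hG (2 * n)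
    have hfactor : (2 * (n : R) + 2) * (b + 2 * n + 1) = 4 * (n + 1) * (c + n) := by
      linear_combination (-(2 * (n : R) + 2)) * hc
    push_cast at hrec
    rw [hfactor] at hrec
    rw [← ih, ← hrec, mul_add_one, ascPochhammer_succ_eval, Nat.factorial_succ]
    push_cast
    ring

lemma coeff_odd_of_bessel_ode [NoZeroDivisors R] [CharZero R] (hb : ∀ n : ℕ, b ≠ -(n : R))
    (hG : X * d⁄dX R (d⁄dX R G) + C b * d⁄dX R G = X * G) (n : ℕ) :
    coeff (2 * n + 1) G = 0 := by
  induction n with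
  | zero =>
    have h := congrArg (coeff 0) hG
    simp only [map_add, coeff_zero_X_mul, coeff_C_mul, coeff_derivative] at h
    have hb0 : b ≠ 0 := by simpa using hb 0
    simpa [hb0] using h
  | succ n ih =>
    have hrec := coeff_add_two_of_bessel_ode hG (2 * n + 1)
    rw [ih] at hrec
    refine (mul_eq_zero.mp hrec).resolve_left (mul_ne_zero ?_ fun h => ?_)
    · exact_mod_cast (2 * n + 2).succ_ne_zero
    · refine hb (2 * n + 2) ?_
      push_cast at h ⊢
      linear_combination h

end BesselEquation

section Kummer

variable {K : Type*} [Field K] [CharZero K]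

/-- The confluent hypergeometric series `₁F₁(a; b; X) = ∑ (a)_k / ((b)_k k!) X^k`, as a formal power
series. Coefficients with `(b)_k = 0` are `0`. -/
noncomputable def kummerSeries (a b : K) : K⟦X⟧ :=
  mk fun k => (ascPochhammer K k).eval a / ((ascPochhammer K k).eval b * (k.factorial : K))

lemma coeff_succ_kummerSeries (a : K) {b : K} (hb : ∀ n : ℕ, b ≠ -(n : K)) (k : ℕ) :
    (k + 1) * (b + k) * coeff (k + 1) (kummerSeries a b) =
      (a + k) * coeff k (kummerSeries a b) := by
  have hpoch := ascPochhammer_eval_ne_zero hb k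
  have hlast : b + k ≠ 0 := fun h => hb k (eq_neg_of_add_eq_zero_left h)
  have hfactorial : (k.factorial : K) ≠ 0 := Nat.cast_ne_zero.mpr k.factorial_ne_zero
  have hk : (k + 1 : K) ≠ 0 := Nat.cast_add_one_ne_zero k
  simp only [kummerSeries, coeff_mk, ascPochhammer_succ_eval, Nat.factorial_succ]
  push_cast
  field_simp

lemma kummerSeries_ode (a : K) {b : K} (hb : ∀ n : ℕ, b ≠ -(n : K)) :
    X * d⁄dX K (d⁄dX K (kummerSeries a b)) + (C b - X) * d⁄dX K (kummerSeries a b) =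
      C a * kummerSeries a b := by
  ext k
  have hrec := coeff_succ_kummerSeries a hb k
  cases k <;>
  · simp only [sub_mul, map_add, map_sub, coeff_zero_X_mul, coeff_succ_X_mul, coeff_C_mul,
      coeff_derivative]
    push_cast at hrec ⊢
    linear_combination hrec

lemma rescale_kummerSeries_ode (a : K) {b : K} (hb : ∀ n : ℕ, b ≠ -(n : K)) (c : K) :
    X * d⁄dX K (d⁄dX K (rescale c (kummerSeries a b))) +
        (C b - C c * X) * d⁄dX K (rescale c (kummerSeries a b)) =
      C (c * a) * rescale c (kummerSeries a b) := by
  have hrescale_C (x : K) : rescale c (C x) = C x := by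
    ext n
    cases n <;> simp [coeff_rescale, coeff_C]
  have h := congrArg (rescale c) (kummerSeries_ode a hb)
  simp only [map_add, map_sub, map_mul, rescale_X, hrescale_C] at h
  simp only [derivative_rescale, Derivation.leibniz, derivative_C, smul_eq_mul, map_mul]
  linear_combination C c * h

/-- The series `exp (-X) · ₁F₁(a; 2a; 2X)` of Kummer's second theorem. -/
noncomputable def kummerSecondSeries (a : K) : K⟦X⟧ :=
  rescale 2 (kummerSeries a (2 * a)) * rescale (-1) (exp K)

lemma kummerSecondSeries_ode {a : K} (ha : ∀ n : ℕ, 2 * a ≠ -(n : K)) :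
    X * d⁄dX K (d⁄dX K (kummerSecondSeries a)) + C (2 * a) * d⁄dX K (kummerSecondSeries a) =
      X * kummerSecondSeries a := by
  set F := rescale 2 (kummerSeries a (2 * a))
  set E := rescale (-1) (exp K)
  have hE : d⁄dX K E = -E := derivative_rescale_neg_one_exp
  have hF : X * d⁄dX K (d⁄dX K F) + (C (2 * a) - 2 * X) * d⁄dX K F = C (2 * a) * F := by
    simpa only [map_ofNat] using rescale_kummerSeries_ode a ha 2
  have hFE : d⁄dX K (F * E) = (d⁄dX K F - F) * E := by
    rw [Derivation.leibniz, hE, smul_eq_mul, smul_eq_mul]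
    ring
  have hFE' : d⁄dX K (d⁄dX K (F * E)) = (d⁄dX K (d⁄dX K F) - 2 * d⁄dX K F + F) * E := by
    rw [hFE, Derivation.leibniz, hE, smul_eq_mul, smul_eq_mul, map_sub]
    ring
  rw [show kummerSecondSeries a = F * E from rfl, hFE', hFE]
  linear_combination E * hF

lemma coeff_odd_kummerSecondSeries {a : K} (ha : ∀ n : ℕ, 2 * a ≠ -(n : K)) (n : ℕ) :
    coeff (2 * n + 1) (kummerSecondSeries a) = 0 :=
  coeff_odd_of_bessel_ode ha (kummerSecondSeries_ode ha) n

lemma coeff_even_kummerSecondSeries {a : K} (ha : ∀ n : ℕ, 2 * a ≠ -(n : K)) (n : ℕ) :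
    coeff (2 * n) (kummerSecondSeries a) =
      1 / (2 ^ (2 * n) * (ascPochhammer K n).eval (a + 1 / 2) * (n.factorial : K)) := by
  have hconst : coeff 0 (kummerSecondSeries a) = 1 := by
    simp [kummerSecondSeries, kummerSeries, coeff_mul, coeff_rescale]
  have ha' (m : ℕ) : a + 1 / 2 ≠ -(m : K) := fun h =>
    ha (2 * m + 1) (by push_cast; linear_combination 2 * h)
  have hdenom : 2 ^ (2 * n) * (ascPochhammer K n).eval (a + 1 / 2) * (n.factorial : K) ≠ 0 :=
    mul_ne_zero (mul_ne_zero (pow_ne_zero _ two_ne_zero) (ascPochhammer_eval_ne_zero ha' n))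
      (Nat.cast_ne_zero.mpr n.factorial_ne_zero)
  have hparam : 2 * (a + 1 / 2) = 2 * a + 1 := by ring
  rw [eq_div_iff hdenom, mul_comm,
    coeff_even_of_bessel_ode hparam (kummerSecondSeries_ode ha), hconst]

end Kummer

lemma tsum_eq_tsum_two_mul_of_odd_eq_zero {M : Type*} [AddCommMonoid M] [TopologicalSpace M]
    {f : ℕ → M} (hf : ∀ n, f (2 * n + 1) = 0) : ∑' n, f n = ∑' n, f (2 * n) := by
  refine ((mul_right_injective₀ two_ne_zero).tsum_eq fun n hn => ?_).symm
  obtain ⟨m, rfl | rfl⟩ := n.even_or_odd'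
  · exact ⟨m, rfl⟩
  · exact absurd (hf m) hn

lemma tsum_coeff_mul_coeff_smul {R E : Type*} [Semiring R] [AddCommGroup E] [Module R E]
    [UniformSpace E] [IsUniformAddGroup E] [CompleteSpace E] [T0Space E] {F G : R⟦X⟧} {u : ℕ → E}
    (h : Summable fun p : ℕ × ℕ => (coeff p.1 F * coeff p.2 G) • u (p.1 + p.2)) :
    ∑' p : ℕ × ℕ, (coeff p.1 F * coeff p.2 G) • u (p.1 + p.2) = ∑' n, coeff n (F * G) • u n := by
  let e := Finset.HasAntidiagonal.sigmaAntidiagonalEquivProd (A := ℕ)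
  rw [← e.tsum_eq]
  refine (Summable.tsum_sigma (e.summable_iff.mpr h)).trans ?_
  refine tsum_congr fun n => ?_
  rw [coeff_mul, Finset.sum_smul, ← Finset.tsum_subtype]
  refine tsum_congr fun p => ?_
  simp [e, Finset.HasAntidiagonal.mem_antidiagonal.mp p.2]

section TaylorShift

variable {E : Type*} [NormedAddCommGroup E] [NormedSpace ℂ E] [CompleteSpace E]
  {φ : ℂ → E} {c z : ℂ} {r : ℝ}

lemma hasSum_coeff_exp_smul_iteratedDeriv (hφ : DifferentiableOn ℂ φ (Metric.ball c r))
    (hz : z ∈ Metric.ball c r) (k : ℕ) :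
    HasSum (fun m => coeff m (rescale (z - c) (exp ℂ)) • iteratedDeriv (k + m) φ c)
      (iteratedDeriv k φ z) := by
  have hderiv : DifferentiableOn ℂ (iteratedDeriv k φ) (Metric.ball c r) := by
    rw [iteratedDeriv_eq_iterate]
    exact ((hφ.analyticOnNhd Metric.isOpen_ball).iterated_deriv k).differentiableOn
  convert Complex.hasSum_taylorSeries_on_ball hderiv hz using 2 with m
  simp only [iteratedDeriv_eq_iterate, ← Function.iterate_add_apply, add_comm m k, smul_smul]
  simp [coeff_rescale, coeff_exp, mul_comm]

lemma tsum_coeff_smul_iteratedDeriv_eq (F : ℂ⟦X⟧) (hφ : DifferentiableOn ℂ φ (Metric.ball c r))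
    (hz : z ∈ Metric.ball c r)
    (hsum : Summable fun p : ℕ × ℕ =>
      (coeff p.1 F * coeff p.2 (rescale (z - c) (exp ℂ))) • iteratedDeriv (p.1 + p.2) φ c) :
    ∑' k, coeff k F • iteratedDeriv k φ z =
      ∑' n, coeff n (F * rescale (z - c) (exp ℂ)) • iteratedDeriv n φ c := by
  rw [← tsum_coeff_mul_coeff_smul (u := fun n => iteratedDeriv n φ c) hsum, hsum.tsum_prod]
  refine tsum_congr fun k => ?_
  simp only [mul_smul]
  exact ((hasSum_coeff_exp_smul_iteratedDeriv hφ hz k).const_smul _).tsum_eq.symm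

end TaylorShift

theorem ramanujan_entry8_general {E : Type*} [NormedAddCommGroup E] [NormedSpace ℂ E]
    [CompleteSpace E] {φ : ℂ → E} {R : ℝ} (hR : 1 < R)
    (hφ : DifferentiableOn ℂ φ (Metric.ball 1 R)) {a : ℂ} (h2a : ∀ n : ℕ, 2 * a ≠ -(n : ℂ))
    (hsum : Summable fun p : ℕ × ℕ =>
      (2 ^ p.1 * poch a p.1 / (poch (2 * a) p.1 * (p.1.factorial : ℂ)) *
        ((-1) ^ (p.1 + p.2) * poch (-((p.1 + p.2 : ℕ) : ℂ)) p.1 / ((p.1 + p.2).factorial : ℂ))) •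
          iteratedDeriv (p.1 + p.2) φ 1) :
    ∑' k : ℕ, (2 ^ k * poch a k / (poch (2 * a) k * (k.factorial : ℂ))) • iteratedDeriv k φ 0 =
      ∑' k : ℕ, (1 / (2 ^ (2 * k) * poch (a + 1 / 2) k * (k.factorial : ℂ))) •
        iteratedDeriv (2 * k) φ 1 := by
  have hcoeff (k : ℕ) : 2 ^ k * poch a k / (poch (2 * a) k * (k.factorial : ℂ)) =
      coeff k (rescale 2 (kummerSeries a (2 * a))) := by
    rw [coeff_rescale, kummerSeries, coeff_mk, mul_div_assoc, poch, poch]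
  have hexp (k m : ℕ) : (-1) ^ (k + m) * poch (-((k + m : ℕ) : ℂ)) k / ((k + m).factorial : ℂ) =
      coeff m (rescale (0 - 1) (exp ℂ)) := by
    rw [poch, neg_one_pow_mul_ascPochhammer_neg_div_factorial]
    simp [coeff_rescale, coeff_exp, div_eq_mul_inv]
  have hzero : (0 : ℂ) ∈ Metric.ball 1 R := by simpa using hR
  simp only [hcoeff, hexp] at hsum ⊢
  rw [tsum_coeff_smul_iteratedDeriv_eq _ hφ hzero hsum, zero_sub, ← kummerSecondSeries,
    tsum_eq_tsum_two_mul_of_odd_eq_zero fun n => by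
      rw [coeff_odd_kummerSecondSeries h2a, zero_smul]]
  simp only [coeff_even_kummerSecondSeries h2a, poch]

/-- Ramanujan's Entry 8: if `φ` is analytic on a disk of radius `R > 1` about `1` and the
double series may be summed in either order, then
`Σ_{k≥0} 2^k (a)_k φ^{(k)}(0) / ((2a)_k k!) = Σ_{k≥0} φ^{(2k)}(1) / (2^{2k} (a+1/2)_k k!)`. -/
theorem ramanujan_entry8
    (φ : ℂ → ℂ) (R : ℝ) (hR : 1 < R)
    (hφ : AnalyticOnNhd ℂ φ (Metric.ball (1 : ℂ) R))
    (a : ℂ)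
    (h2a : ∀ n : ℕ, 2 * a ≠ -(n : ℂ))
    (ha : ∀ n : ℕ, a + 1 / 2 ≠ -(n : ℂ))
    (hsum : Summable (fun p : ℕ × ℕ =>
      ‖(2 ^ p.1 * poch a p.1 / (poch (2 * a) p.1 * (Nat.factorial p.1 : ℂ))) *
        ((-1 : ℂ) ^ (p.1 + p.2) * poch (-(((p.1 + p.2 : ℕ)) : ℂ)) p.1 /
          (Nat.factorial (p.1 + p.2) : ℂ)) * iteratedDeriv (p.1 + p.2) φ 1‖)) :
    ∑' k : ℕ, 2 ^ k * poch a k * iteratedDeriv k φ 0 /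
        (poch (2 * a) k * (Nat.factorial k : ℂ))
      = ∑' k : ℕ, iteratedDeriv (2 * k) φ 1 /
          (2 ^ (2 * k) * poch (a + 1 / 2) k * (Nat.factorial k : ℂ)) := by
  simpa only [smul_eq_mul, div_mul_eq_mul_div, one_mul] using
    ramanujan_entry8_general hR hφ.differentiableOn h2a hsum.of_norm
end

section
/- Let n be a natural number and let a, d be complex numbers such that (2a+1)_k ≠ 0 and (d)_k ≠ 0 for all 0 ≤ k ≤ 2n, and (a+1/2)_n ≠ 0. Then the terminating hypergeometric sum Σ_{k=0}^{2n} (−2n)_k (a)_k (d+1)_k 2^k / ((2a+1)_k (d)_k k!) equals (1/2)_n / (a+1/2)_n. -/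
/-!
For any `f`, the terminating sum `∑ k, (-m)_k / k! * f k` is `(-1)^m` times the `m`-th forward
difference of `f` at `0`. For `v k = (a)_k z^k / (c)_k`, the first-order recurrence of `v` and the
Leibniz rule yield a three-term recurrence for `D m = Δ^m v 0`, which for `z = 2` reads
`(c + m) D (m + 1) = (2a - c) D m + m D (m - 1)`.

If `c = 2a`, the middle term drops out and `D` vanishes at odd arguments. If `c = 2a + 1`, the
shifted sequence `v (· + 1)` is of the former kind for `a + 1`, so `Δ^m v 1 = D (m + 1) + D m`
vanishes for odd `m`; this turns the recurrence into a first-order one for `D (2n)`. The same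
vanishing removes the parameter `d`: since `(d+1)_k / (d)_k = 1 + k / d`, its contribution is a
multiple of `Δ^(2n-1) v 1`.
-/

open scoped Nat fwdDiff

section ForwardDifference

lemma fwdDiff_iter_succ_apply {M G : Type*} [AddCommMonoid M] [AddCommGroup G]
    (h : M) (f : M → G) (n : ℕ) (y : M) :
    Δ_[h] ^[n + 1] f y = Δ_[h] ^[n] f (y + h) - Δ_[h] ^[n] f y := by
  rw [Function.iterate_succ_apply', fwdDiff]

lemma fwdDiff_iter_congr {M G : Type*} [AddCommMonoid M] [AddCommGroup G]
    {h : M} {f g : M → G} {n : ℕ} {y : M} (hfg : ∀ k ≤ n, f (y + k • h) = g (y + k • h)) :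
    Δ_[h] ^[n] f y = Δ_[h] ^[n] g y := by
  simp only [fwdDiff_iter_eq_sum_shift]
  exact Finset.sum_congr rfl fun k hk => by rw [hfg k (Finset.mem_range_succ_iff.mp hk)]

variable {R : Type*} [CommRing R]

-- For `m = 0` the truncated exponent `m - 1` is harmless because of the factor `m`.
lemma fwdDiff_iter_affine_mul (p q : R) (f : ℕ → R) (m x : ℕ) :
    Δ_[1] ^[m] (fun k => (p + q * k) * f k) x =
      (p + q * x) * Δ_[1] ^[m] f x + q * m * Δ_[1] ^[m - 1] f (x + 1) := by
  induction m generalizing x with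
  | zero => simp
  | succ m ih =>
    have hm : (m : R) * Δ_[1] ^[m] f (x + 1) =
        m * (Δ_[1] ^[m - 1] f (x + 1 + 1) - Δ_[1] ^[m - 1] f (x + 1)) := by
      cases m with
      | zero => simp
      | succ m => rw [fwdDiff_iter_succ_apply, Nat.add_sub_cancel]
    rw [fwdDiff_iter_succ_apply, ih, ih, fwdDiff_iter_succ_apply, Nat.add_sub_cancel]
    push_cast
    linear_combination -q * hm

lemma fwdDiff_iter_three_term {a c z : R} {v : ℕ → R} {m : ℕ}
    (hv : ∀ k ≤ m, (c + k) * v (k + 1) = z * (a + k) * v k) :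
    (c + m) * Δ_[1] ^[m + 1] v 0 =
      (z * (a + m) - (c + 2 * m)) * Δ_[1] ^[m] v 0 + (z - 1) * m * Δ_[1] ^[m - 1] v 0 := by
  have leibniz : c * Δ_[1] ^[m] v 1 + m * Δ_[1] ^[m - 1] v 2 =
      z * a * Δ_[1] ^[m] v 0 + z * m * Δ_[1] ^[m - 1] v 1 := by
    have hΔ : Δ_[1] ^[m] (fun k => (c + 1 * k) * v (k + 1)) 0 =
        Δ_[1] ^[m] (fun k => (z * a + z * k) * v k) 0 :=
      fwdDiff_iter_congr fun k hk => by simpa [mul_add] using hv k hk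
    rw [fwdDiff_iter_affine_mul, fwdDiff_iter_affine_mul, fwdDiff_iter_comp_add 1 v,
      fwdDiff_iter_comp_add 1 v] at hΔ
    simpa using hΔ
  have hsucc := fwdDiff_iter_succ_apply 1 v m 0
  cases m with
  | zero =>
    simp only [Nat.cast_zero, zero_add] at leibniz hsucc ⊢
    linear_combination leibniz + c * hsucc
  | succ m =>
    have h₀ := fwdDiff_iter_succ_apply 1 v m 0
    have h₁ := fwdDiff_iter_succ_apply 1 v m 1
    simp only [Nat.add_sub_cancel, zero_add, Nat.reduceAdd] at leibniz hsucc h₀ h₁ ⊢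
    linear_combination leibniz + (c + (m + 1 : ℕ)) * hsucc + (m + 1 : ℕ) * h₁
      + (1 - z) * (m + 1 : ℕ) * h₀

end ForwardDifference

section Vanishing

variable {R : Type*} [CommRing R] [NoZeroDivisors R] {a : R} {v : ℕ → R} {n : ℕ}

lemma fwdDiff_iter_two_mul_add_one_apply_zero
    (hc : ∀ k < 2 * n + 1, 2 * a + k ≠ 0)
    (hv : ∀ k < 2 * n + 1, (2 * a + k) * v (k + 1) = 2 * (a + k) * v k) :
    Δ_[1] ^[2 * n + 1] v 0 = 0 := by
  induction n with
  | zero =>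
    refine (mul_eq_zero.mp ?_).resolve_left (hc 0 (by lia))
    rw [fwdDiff_iter_three_term fun k hk => hv k (by lia)]
    simp
  | succ n ih =>
    have hprev : Δ_[1] ^[2 * (n + 1) - 1] v 0 = 0 :=
      ih (fun k hk => hc k (by lia)) fun k hk => hv k (by lia)
    refine (mul_eq_zero.mp ?_).resolve_left (hc (2 * (n + 1)) (by lia))
    rw [fwdDiff_iter_three_term fun k hk => hv k (by lia), hprev]
    ring

lemma fwdDiff_iter_two_mul_add_one_apply_one
    (hc : ∀ k < 2 * (n + 1), 2 * a + 1 + k ≠ 0)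
    (hv : ∀ k < 2 * (n + 1), (2 * a + 1 + k) * v (k + 1) = 2 * (a + k) * v k) :
    Δ_[1] ^[2 * n + 1] v 1 = 0 := by
  have hshift (k : ℕ) : 2 * (a + 1) + k = 2 * a + 1 + (k + 1 : ℕ) := by push_cast; ring
  have h : Δ_[1] ^[2 * n + 1] (fun k => v (k + 1)) 0 = 0 := by
    refine fwdDiff_iter_two_mul_add_one_apply_zero (a := a + 1) (fun k hk => ?_) fun k hk => ?_
    · exact hshift k ▸ hc (k + 1) (by lia)
    · rw [hshift, hv (k + 1) (by lia)]
      push_cast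
      ring
  simpa only [fwdDiff_iter_comp_add, zero_add] using h

lemma natCast_mul_fwdDiff_iter_two_mul_sub_one_apply_one
    (hc : ∀ k < 2 * n, 2 * a + 1 + k ≠ 0)
    (hv : ∀ k < 2 * n, (2 * a + 1 + k) * v (k + 1) = 2 * (a + k) * v k) :
    ((2 * n : ℕ) : R) * Δ_[1] ^[2 * n - 1] v 1 = 0 := by
  cases n with
  | zero => simp
  | succ n => exact mul_eq_zero_of_right _ (fwdDiff_iter_two_mul_add_one_apply_one hc hv)

lemma fwdDiff_iter_two_mul_succ
    (hc : ∀ k < 2 * (n + 1), 2 * a + 1 + k ≠ 0)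
    (hv : ∀ k < 2 * (n + 1), (2 * a + 1 + k) * v (k + 1) = 2 * (a + k) * v k) :
    (2 * a + 1 + 2 * n) * Δ_[1] ^[2 * (n + 1)] v 0 = (2 * n + 1) * Δ_[1] ^[2 * n] v 0 := by
  have hodd : Δ_[1] ^[2 * (n + 1)] v 0 = -Δ_[1] ^[2 * n + 1] v 0 := by
    rw [Nat.mul_succ, fwdDiff_iter_succ_apply, zero_add,
      fwdDiff_iter_two_mul_add_one_apply_one hc hv, zero_sub]
  have hthree := fwdDiff_iter_three_term (m := 2 * n) fun k hk => hv k (by lia)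
  have hprev : ((2 * n : ℕ) : R) * (Δ_[1] ^[2 * n] v 0 + Δ_[1] ^[2 * n - 1] v 0) = 0 := by
    have h := natCast_mul_fwdDiff_iter_two_mul_sub_one_apply_one (n := n)
      (fun k hk => hc k (by lia)) fun k hk => hv k (by lia)
    cases n with
    | zero => simp
    | succ n => simpa [Nat.mul_succ, fwdDiff_iter_succ_apply] using h
  push_cast at hthree hprev
  linear_combination (2 * a + 1 + 2 * n) * hodd - hthree - hprev

end Vanishing

section Pochhammer

lemma ascPochhammer_eval_neg_natCast {R : Type*} [CommRing R] (m k : ℕ) :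
    (ascPochhammer R k).eval (-(m : R)) = (-1) ^ k * k ! * m.choose k := by
  rw [ascPochhammer_eval_neg_eq_descPochhammer, descPochhammer_eval_eq_descFactorial,
    Nat.descFactorial_eq_factorial_mul_choose, Nat.cast_mul, mul_assoc]

lemma mul_ascPochhammer_eval_add_one {R : Type*} [CommSemiring R] (d : R) (k : ℕ) :
    d * (ascPochhammer R k).eval (d + 1) = (ascPochhammer R k).eval d * (d + k) := by
  rw [← ascPochhammer_succ_eval, ascPochhammer_succ_left]
  simp

variable {K : Type*} [Field K]

lemma ascPochhammer_eval_add_one_div {d : K} {k : ℕ} (hd : (ascPochhammer K k).eval d ≠ 0) :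
    (ascPochhammer K k).eval (d + 1) / (ascPochhammer K k).eval d = 1 + d⁻¹ * k := by
  rcases eq_or_ne d 0 with rfl | hd₀
  · obtain rfl : k = 0 := of_not_not fun hk => hd (ascPochhammer_ne_zero_eval_zero K hk)
    simp
  · rw [div_eq_iff hd]
    field_simp
    rw [mul_ascPochhammer_eval_add_one, mul_comm]

lemma add_natCast_ne_zero_of_ascPochhammer_eval_ne_zero {c : K} {N k : ℕ}
    (hc : (ascPochhammer K N).eval c ≠ 0) (hk : k < N) : c + k ≠ 0 := fun h =>
  hc ((ascPochhammer_eval_eq_zero_iff N c).mpr ⟨k, hk, (neg_eq_of_add_eq_zero_right h).symm⟩)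

lemma ascPochhammer_mul_pow_div_succ {c : K} (a z : K) {k : ℕ} (hc : c + k ≠ 0) :
    (c + k) * ((ascPochhammer K (k + 1)).eval a * z ^ (k + 1) / (ascPochhammer K (k + 1)).eval c) =
      z * (a + k) * ((ascPochhammer K k).eval a * z ^ k / (ascPochhammer K k).eval c) := by
  simp only [ascPochhammer_succ_eval]
  field_simp
  ring

lemma sum_ascPochhammer_neg_div_factorial_mul [CharZero K] (m : ℕ) (f : ℕ → K) :
    ∑ k ∈ Finset.range (m + 1), (ascPochhammer K k).eval (-(m : K)) / k ! * f k =
      (-1) ^ m * Δ_[1] ^[m] f 0 := by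
  rw [fwdDiff_iter_eq_sum_shift, Finset.mul_sum]
  refine Finset.sum_congr rfl fun k hk => ?_
  have hsign : (-1 : K) ^ m * (-1) ^ (m - k) = (-1) ^ k := by
    have hexp : m + (m - k) = k + 2 * (m - k) := by grind
    rw [← pow_add, hexp, pow_add, (even_two_mul _).neg_one_pow, mul_one]
  have hfact : (k ! : K) ≠ 0 := Nat.cast_ne_zero.mpr k.factorial_ne_zero
  rw [ascPochhammer_eval_neg_natCast, ← hsign]
  simp only [smul_eq_mul, mul_one, zero_add, zsmul_eq_mul, Int.cast_mul, Int.cast_pow,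
    Int.cast_neg, Int.cast_one, Int.cast_natCast]
  field_simp

lemma fwdDiff_iter_two_mul_eq_ascPochhammer_div [NeZero (2 : K)] {a : K} {v : ℕ → K} {n : ℕ}
    (hc : ∀ k < 2 * n, 2 * a + 1 + k ≠ 0)
    (hv : ∀ k < 2 * n, (2 * a + 1 + k) * v (k + 1) = 2 * (a + k) * v k) :
    Δ_[1] ^[2 * n] v 0 =
      v 0 * ((ascPochhammer K n).eval (1 / 2) / (ascPochhammer K n).eval (a + 1 / 2)) := by
  induction n with
  | zero => simp
  | succ n ih =>
    have h2 : (2 : K) ≠ 0 := two_ne_zero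
    have hcn : 2 * a + 1 + 2 * n ≠ 0 := mod_cast hc (2 * n) (by lia)
    have hratio : (1 / 2 + n) / (a + 1 / 2 + n) = (2 * n + 1) / (2 * a + 1 + 2 * n) := by
      rw [← mul_div_mul_left _ _ h2]
      congr 1 <;> field_simp
      ring
    rw [ascPochhammer_succ_eval, ascPochhammer_succ_eval, mul_div_mul_comm, hratio, ← mul_assoc,
      ← ih (fun k hk => hc k (by lia)) fun k hk => hv k (by lia), mul_div_assoc', eq_div_iff hcn]
    linear_combination fwdDiff_iter_two_mul_succ hc hv

end Pochhammer

theorem terminating_3F2_even_general {K : Type*} [Field K] [CharZero K] (n : ℕ) (a d : K)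
    (h2a1 : ∀ k ≤ 2 * n, (ascPochhammer K k).eval (2 * a + 1) ≠ 0)
    (hd : ∀ k ≤ 2 * n, (ascPochhammer K k).eval d ≠ 0) :
    ∑ k ∈ Finset.range (2 * n + 1),
        (ascPochhammer K k).eval (-((2 * n : ℕ) : K)) * (ascPochhammer K k).eval a *
            (ascPochhammer K k).eval (d + 1) * 2 ^ k /
          ((ascPochhammer K k).eval (2 * a + 1) * (ascPochhammer K k).eval d * (k ! : K)) =
      (ascPochhammer K n).eval (1 / 2) / (ascPochhammer K n).eval (a + 1 / 2) := by
  let v (k : ℕ) : K := (ascPochhammer K k).eval a * 2 ^ k / (ascPochhammer K k).eval (2 * a + 1)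
  have hc (k : ℕ) (hk : k < 2 * n) : 2 * a + 1 + k ≠ 0 :=
    add_natCast_ne_zero_of_ascPochhammer_eval_ne_zero (h2a1 _ le_rfl) hk
  have hv (k : ℕ) (hk : k < 2 * n) : (2 * a + 1 + k) * v (k + 1) = 2 * (a + k) * v k :=
    ascPochhammer_mul_pow_div_succ a 2 (hc k hk)
  calc
    _ = ∑ k ∈ Finset.range (2 * n + 1), (ascPochhammer K k).eval (-((2 * n : ℕ) : K)) / k ! *
          ((1 + d⁻¹ * k) * v k) := Finset.sum_congr rfl fun k hk => by
      rw [← ascPochhammer_eval_add_one_div (hd k (Finset.mem_range_succ_iff.mp hk))]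
      ring
    _ = Δ_[1] ^[2 * n] (fun k => (1 + d⁻¹ * k) * v k) 0 := by
      rw [sum_ascPochhammer_neg_div_factorial_mul, (even_two_mul n).neg_one_pow, one_mul]
    _ = Δ_[1] ^[2 * n] v 0 := by
      rw [fwdDiff_iter_affine_mul, zero_add, mul_assoc d⁻¹,
        natCast_mul_fwdDiff_iter_two_mul_sub_one_apply_one hc hv]
      simp
    _ = _ := by
      rw [fwdDiff_iter_two_mul_eq_ascPochhammer_div hc hv]
      simp [v]

/-- Terminating `₃F₂(2)` summation (even case):
`₃F₂(-2n, a, d+1; 2a+1, d; 2) = (1/2)_n / (a+1/2)_n`. -/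
theorem terminating_3F2_even
    (n : ℕ) (a d : ℂ)
    (h2a1 : ∀ k ≤ 2 * n, poch (2 * a + 1) k ≠ 0)
    (hd : ∀ k ≤ 2 * n, poch d k ≠ 0)
    (ha : poch (a + 1 / 2) n ≠ 0) :
    ∑ k ∈ Finset.range (2 * n + 1),
        poch (-((2 * n : ℕ) : ℂ)) k * poch a k * poch (d + 1) k * 2 ^ k /
          (poch (2 * a + 1) k * poch d k * (Nat.factorial k : ℂ))
      = poch (1 / 2) n / poch (a + 1 / 2) n :=
  terminating_3F2_even_general n a d h2a1 hd
end
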